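/- Let G be a finite connected simple graph in which every vertex has degree 1 or degree 3, together with a prescribed orientation of exactly those edges that are incident to a degree-1 vertex, such that at least one degree-1 vertex is a source (its unique edge is oriented away from it) and at least one degree-1 vertex is a sink (its unique edge is oriented toward it). Assume moreover that for every cut vertex v of G, every connected component of G with v deleted contains a degree-1 vertex of G, and for every bridge edge e of G, each of the two connected components of G with e deleted contains a degree-1 vertex of G. Then the prescribed orientation extends to an orientation of all edges of G (a choice, for each edge {a,b}, of exactly one of the directed edges (a,b) or (b,a)) such that the resulting directed graph has no directed cycles and every vertex with no incoming edge and every vertex with no outgoing edge has degree 1. -/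

import Mathlib

namespace LyapOrient

/-- A partial height function on the finite set `S`. -/
structure Good {V : Type*} (G : SimpleGraph V) (L src : V → Prop) (S : Finset V)
    (f : V → ℝ) : Prop where
  leaf_mem : ∀ v, L v → v ∈ S
  leaf_src : ∀ v, L v → src v → f v = 0
  leaf_snk : ∀ v, L v → ¬ src v → f v = 1
  pos : ∀ v ∈ S, ¬ L v → 0 < f v
  lt_one : ∀ v ∈ S, ¬ L v → f v < 1
  inj : ∀ a ∈ S, ∀ b ∈ S, ¬ L a → f a = f b → a = b
  low : ∀ v ∈ S, ¬ L v → ∃ a ∈ S, G.Adj v a ∧ f a < f v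
  high : ∀ v ∈ S, ¬ L v → ∃ a ∈ S, G.Adj v a ∧ f v < f a

/-- Edges of `G` avoiding `S`. -/
def off {V : Type*} (G : SimpleGraph V) (S : Finset V) : SimpleGraph V where
  Adj a b := G.Adj a b ∧ a ∉ S ∧ b ∉ S
  symm := ⟨fun _ _ h => ⟨h.1.symm, h.2.2, h.2.1⟩⟩
  loopless := ⟨fun _ h => G.loopless.irrefl _ h.1⟩

theorem off_reach {V : Type*} {G : SimpleGraph V} {S : Finset V} {w a : V} (hw : w ∉ S)
    (h : (off G S).Reachable w a) : a ∉ S := by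
  rw [SimpleGraph.reachable_iff_reflTransGen] at h
  induction h with
  | refl => exact hw
  | tail _ h _ => exact h.2.2

theorem good_range {V : Type*} {G : SimpleGraph V} {L src : V → Prop} {S : Finset V}
    {f : V → ℝ} (h : Good G L src S f) (v : V) (hv : v ∈ S) : 0 ≤ f v ∧ f v ≤ 1 := by
  by_cases hl : L v
  · by_cases hs : src v
    · rw [h.leaf_src v hl hs]; norm_num
    · rw [h.leaf_snk v hl hs]; norm_num
  · exact ⟨(h.pos v hv hl).le, (h.lt_one v hv hl).le⟩

/-- Adding an ear. -/
theorem add_ear {V : Type*} [DecidableEq V] {G : SimpleGraph V} {L src : V → Prop}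
    {S : Finset V} {f : V → ℝ} (h : Good G L src S f) {x y c d : V}
    (hx : x ∈ S) (hy : y ∈ S) (hxy : f x < f y) (hc : c ∉ S)
    (hxc : G.Adj x c) (hyd : G.Adj y d) (hcd : (off G S).Reachable c d) :
    ∃ S' f', Good G L src S' f' ∧ S ⊂ S' := by
  classical
  obtain ⟨q, hq⟩ := hcd.exists_isPath
  obtain ⟨z, hz, hzmin⟩ := Finset.exists_min_image (S.filter (fun v => f x < f v)) f
    ⟨y, by simp [hy, hxy]⟩
  simp only [Finset.mem_filter] at hz hzmin
  have hzy : f z ≤ f y := hzmin y ⟨hy, hxy⟩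
  have hgap : ∀ v ∈ S, f v ≤ f x ∨ f z ≤ f v := by
    intro v hv
    by_cases hh : f x < f v
    · exact Or.inr (hzmin v ⟨hv, hh⟩)
    · exact Or.inl (not_lt.mp hh)
  set n := q.length with hn
  have hqS : ∀ i, i ≤ n → q.getVert i ∉ S := by
    intro i hi
    exact off_reach hc ⟨q.take i⟩
  -- index function
  obtain ⟨idx, hidx⟩ : ∃ idx : V → ℕ, ∀ i, i ≤ n → idx (q.getVert i) = i := by
    refine ⟨Function.invFunOn q.getVert {i | i ≤ n}, fun i hi => ?_⟩
    have hinj := hq.getVert_injOn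
    exact hinj.leftInvOn_invFunOn hi
  let T : Finset V := (Finset.range (n+1)).image q.getVert
  have hT : ∀ v, v ∈ T ↔ ∃ i, i ≤ n ∧ q.getVert i = v := by
    intro v; simp [T, Nat.lt_succ_iff]
  let val : ℕ → ℝ := fun i => f x + (f z - f x) * ((i + 1 : ℝ) / (n + 2))
  have hd : 0 < f z - f x := by linarith [hz.2]
  have hn2 : (0 : ℝ) < n + 2 := by positivity
  have hmono : ∀ i j : ℕ, i < j → val i < val j := by
    intro i j hij
    have : (i : ℝ) < j := by exact_mod_cast hij
    simp only [val]
    gcongr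
  have hlo : ∀ i, f x < val i := by
    intro i
    have : 0 < (f z - f x) * ((i + 1 : ℝ) / (n + 2)) := by positivity
    simp only [val]; linarith
  have hhi : ∀ i, i ≤ n → val i < f z := by
    intro i hi
    have hi' : (i : ℝ) ≤ n := by exact_mod_cast hi
    have : (i + 1 : ℝ) / (n + 2) < 1 := by
      rw [div_lt_one hn2]; linarith
    simp only [val]; nlinarith
  let g : V → ℝ := fun v => if v ∈ S then f v else val (idx v)
  have gS : ∀ v ∈ S, g v = f v := fun v hv => by simp [g, hv]
  have gq : ∀ i, i ≤ n → g (q.getVert i) = val i := fun i hi => by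
    simp [g, hqS i hi, hidx i hi]
  have hx01 := good_range h x hx
  have hz01 := good_range h z hz.1
  have hqL : ∀ i, i ≤ n → ¬ L (q.getVert i) := fun i hi hl => hqS i hi (h.leaf_mem _ hl)
  refine ⟨S ∪ T, g, ⟨?_, ?_, ?_, ?_, ?_, ?_, ?_, ?_⟩, ?_⟩
  · intro v hv; exact Finset.mem_union_left _ (h.leaf_mem v hv)
  · intro v hv hs; rw [gS v (h.leaf_mem v hv)]; exact h.leaf_src v hv hs
  · intro v hv hs; rw [gS v (h.leaf_mem v hv)]; exact h.leaf_snk v hv hs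
  · intro v hv hl
    rcases Finset.mem_union.mp hv with hv | hv
    · rw [gS v hv]; exact h.pos v hv hl
    · obtain ⟨i, hi, rfl⟩ := (hT v).mp hv
      rw [gq i hi]; linarith [hlo i]
  · intro v hv hl
    rcases Finset.mem_union.mp hv with hv | hv
    · rw [gS v hv]; exact h.lt_one v hv hl
    · obtain ⟨i, hi, rfl⟩ := (hT v).mp hv
      rw [gq i hi]; linarith [hhi i hi]
  · intro a ha b hb hl hab
    rcases Finset.mem_union.mp ha with ha | ha <;> rcases Finset.mem_union.mp hb with hb | hb
    · rw [gS a ha, gS b hb] at hab; exact h.inj a ha b hb hl hab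
    · obtain ⟨i, hi, rfl⟩ := (hT b).mp hb
      rw [gq i hi, gS a ha] at hab
      rcases hgap a ha with h1 | h1 <;> linarith [hlo i, hhi i hi]
    · obtain ⟨i, hi, rfl⟩ := (hT a).mp ha
      rw [gq i hi, gS b hb] at hab
      rcases hgap b hb with h1 | h1 <;> linarith [hlo i, hhi i hi]
    · obtain ⟨i, hi, rfl⟩ := (hT a).mp ha
      obtain ⟨j, hj, rfl⟩ := (hT b).mp hb
      rw [gq i hi, gq j hj] at hab
      rcases lt_trichotomy i j with h1 | h1 | h1
      · linarith [hmono _ _ h1]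
      · rw [h1]
      · linarith [hmono _ _ h1]
  · intro v hv hl
    rcases Finset.mem_union.mp hv with hv | hv
    · obtain ⟨a, ha, h1, h2⟩ := h.low v hv hl
      exact ⟨a, Finset.mem_union_left _ ha, h1, by rwa [gS a ha, gS v hv]⟩
    · obtain ⟨i, hi, rfl⟩ := (hT v).mp hv
      rcases i with _ | i
      · refine ⟨x, Finset.mem_union_left _ hx, by simpa using hxc.symm, ?_⟩
        rw [gS x hx, gq 0 hi]; exact hlo 0
      · refine ⟨q.getVert i, Finset.mem_union_right _ ((hT _).mpr ⟨i, by omega, rfl⟩),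
          (q.adj_getVert_succ (by omega)).1.symm, ?_⟩
        rw [gq _ hi, gq i (by omega)]; exact hmono _ _ (by omega)
  · intro v hv hl
    rcases Finset.mem_union.mp hv with hv | hv
    · obtain ⟨a, ha, h1, h2⟩ := h.high v hv hl
      exact ⟨a, Finset.mem_union_left _ ha, h1, by rwa [gS a ha, gS v hv]⟩
    · obtain ⟨i, hi, rfl⟩ := (hT v).mp hv
      rcases hi.eq_or_lt with h1 | h1
      · refine ⟨y, Finset.mem_union_left _ hy, ?_, ?_⟩
        · rw [h1, hn, q.getVert_length]; exact hyd.symm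
        · rw [gS y hy, gq i hi]; linarith [hhi i hi]
      · refine ⟨q.getVert (i+1), Finset.mem_union_right _ ((hT _).mpr ⟨i+1, by omega, rfl⟩),
          (q.adj_getVert_succ h1).1, ?_⟩
        rw [gq _ hi, gq (i+1) h1]; exact hmono _ _ (by omega)
  · refine ⟨Finset.subset_union_left, fun hh => hc (hh (Finset.mem_union_right _ ?_))⟩
    exact (hT c).mpr ⟨0, by omega, by simp⟩

/-- If the height function is not total, it can be extended. -/
theorem extend {V : Type*} [DecidableEq V] {G : SimpleGraph V} {L src : V → Prop}
    (hconn : G.Connected)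
    (hL : ∀ v a b, L v → G.Adj v a → G.Adj v b → a = b)
    (hs : ∃ v, L v ∧ src v) (ht : ∃ v, L v ∧ ¬ src v)
    (hcut : ∀ v : V, ¬ (G.induce {u : V | u ≠ v}).Connected →
      ∀ c : (G.induce {u : V | u ≠ v}).ConnectedComponent,
        ∃ u : {u : V // u ∈ {u : V | u ≠ v}},
          (G.induce {u : V | u ≠ v}).connectedComponentMk u = c ∧ L u.1)
    {S : Finset V} {f : V → ℝ} (h : Good G L src S f) {w : V} (hw : w ∉ S) :
    ∃ S' f', Good G L src S' f' ∧ S ⊂ S' := by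
  by_contra hno
  -- all attachments have the same height
  have key : ∀ x y c d, x ∈ S → y ∈ S → G.Adj c x → G.Adj d y →
      (off G S).Reachable w c → (off G S).Reachable w d → f x = f y := by
    intro x y c d hx hy hcx hdy hc hd
    rcases lt_trichotomy (f x) (f y) with h1 | h1 | h1
    · exact absurd (add_ear h hx hy h1 (off_reach hw hc) hcx.symm hdy.symm
        (hc.symm.trans hd)) hno
    · exact h1
    · exact absurd (add_ear h hy hx h1 (off_reach hw hd) hdy.symm hcx.symm
        (hd.symm.trans hc)) hno
  obtain ⟨s, hsL, hss⟩ := hs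
  obtain ⟨t, htL, hts⟩ := ht
  by_cases hN : ∃ x c, x ∈ S ∧ ¬ L x ∧ G.Adj c x ∧ (off G S).Reachable w c
  · obtain ⟨x, c, hx, hxL, hcx, hc⟩ := hN
    have hwx : w ≠ x := fun e => hw (e ▸ hx)
    have hsx : s ≠ x := fun e => hxL (e ▸ hsL)
    have stay : ∀ a, (G.induce {u : V | u ≠ x}).Reachable ⟨w, hwx⟩ a →
        (off G S).Reachable w a.1 := by
      intro a ha
      rw [SimpleGraph.reachable_iff_reflTransGen] at ha
      induction ha with
      | refl => exact SimpleGraph.Reachable.refl _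
      | @tail a b _ hab ih =>
        have hab' : G.Adj a.1 b.1 := hab
        have hbS : b.1 ∉ S := fun hb =>
          b.2 (h.inj x hx b.1 hb hxL (key x b.1 c a.1 hx hb hcx hab' hc ih)).symm
        have : (off G S).Adj a.1 b.1 := ⟨hab', off_reach hw ih, hbS⟩
        exact ih.trans this.reachable
    have hnc : ¬ (G.induce {u : V | u ≠ x}).Connected := fun hcc =>
      off_reach hw (stay ⟨s, hsx⟩ (hcc.preconnected _ _)) (h.leaf_mem s hsL)
    obtain ⟨u, hu, huL⟩ := hcut x hnc (SimpleGraph.connectedComponentMk _ ⟨w, hwx⟩)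
    have := SimpleGraph.ConnectedComponent.exact hu
    exact off_reach hw (stay u this.symm) (h.leaf_mem _ huL)
  · push Not at hN
    -- all attachments are leaves
    have stay : ∀ a, G.Reachable w a → (off G S).Reachable w a ∨
        (L a ∧ ∃ c, G.Adj c a ∧ (off G S).Reachable w c) := by
      intro a ha
      rw [SimpleGraph.reachable_iff_reflTransGen] at ha
      induction ha with
      | refl => exact Or.inl (SimpleGraph.Reachable.refl _)
      | @tail a b _ hab ih =>
        rcases ih with ih | ⟨haL, c, hca, hc⟩
        · by_cases hb : b ∈ S
          · right
            refine ⟨?_, a, hab, ih⟩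
            by_contra hbL
            exact hN b a hb hbL hab ih
          · left
            have : (off G S).Adj a b := ⟨hab, off_reach hw ih, hb⟩
            exact ih.trans this.reachable
        · left
          rwa [hL a b c haL hab hca.symm]
    have h1 : ∀ a, L a → ∃ c, G.Adj c a ∧ (off G S).Reachable w c := by
      intro a ha
      rcases stay a (hconn.preconnected _ _) with h2 | h2
      · exact absurd (h.leaf_mem a ha) (off_reach hw h2)
      · exact h2.2
    obtain ⟨c, hc1, hc2⟩ := h1 s hsL
    obtain ⟨d, hd1, hd2⟩ := h1 t htL
    have := key s t c d (h.leaf_mem s hsL) (h.leaf_mem t htL) hc1 hd1 hc2 hd2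
    rw [h.leaf_src s hsL hss, h.leaf_snk t htL hts] at this
    norm_num at this

theorem exists_total {V : Type*} [Fintype V] [DecidableEq V] {G : SimpleGraph V}
    {L src : V → Prop} (hconn : G.Connected)
    (hL : ∀ v a b, L v → G.Adj v a → G.Adj v b → a = b)
    (hs : ∃ v, L v ∧ src v) (ht : ∃ v, L v ∧ ¬ src v)
    (hcut : ∀ v : V, ¬ (G.induce {u : V | u ≠ v}).Connected →
      ∀ c : (G.induce {u : V | u ≠ v}).ConnectedComponent,
        ∃ u : {u : V // u ∈ {u : V | u ≠ v}},
          (G.induce {u : V | u ≠ v}).connectedComponentMk u = c ∧ L u.1) :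
    ∃ f, Good G L src Finset.univ f := by
  classical
  have start : ∃ S f, Good G L src S f := by
    refine ⟨Finset.univ.filter L, fun v => if src v then 0 else 1, ?_⟩
    constructor <;> simp +contextual
  have grow : ∀ S : Finset V, (∃ f, Good G L src S f) → ∃ f, Good G L src Finset.univ f := by
    intro S
    induction S using WellFoundedGT.induction with
    | ind S ih =>
      rintro ⟨f, hf⟩
      by_cases hS : ∃ w, w ∉ S
      · obtain ⟨w, hw⟩ := hS
        obtain ⟨S', f', h1, h2⟩ := extend hconn hL hs ht hcut hf hw
        exact ih S' h2 ⟨f', h1⟩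
      · push Not at hS
        have : S = Finset.univ := Finset.eq_univ_iff_forall.mpr hS
        exact ⟨f, this ▸ hf⟩
  obtain ⟨S, hS⟩ := start
  exact grow S hS

end LyapOrient

/-- Lemma 5.8 of the paper: Let `G` be a finite connected simple graph
in which every vertex has degree 1 or 3, together with a prescribed orientation `D₀`
of exactly those edges incident to a degree-1 vertex, containing both a source leaf
and a sink leaf.  Assume every connected component obtained by deleting any cut
vertex contains a degree-1 vertex of `G`, and every connected component obtained by
deleting any bridge contains a degree-1 vertex of `G`.  Then `D₀` extends to an
acyclic orientation `D` of all edges of `G` in which every source (no incoming edge)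
and every sink (no outgoing edge) is a degree-1 vertex. -/
theorem extend_orientation {V : Type*} [Fintype V] [DecidableEq V]
    (G : SimpleGraph V) [DecidableRel G.Adj]
    (hconn : G.Connected)
    (hdeg : ∀ v : V, G.degree v = 1 ∨ G.degree v = 3)
    (D₀ : V → V → Prop)
    -- `D₀` orients only edges incident to a degree-1 vertex
    (hD₀dom : ∀ a b : V, D₀ a b → G.Adj a b ∧ (G.degree a = 1 ∨ G.degree b = 1))
    -- `D₀` orients every such edge, in exactly one direction
    (hD₀tot : ∀ a b : V, G.Adj a b → (G.degree a = 1 ∨ G.degree b = 1) →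
      (D₀ a b ↔ ¬ D₀ b a))
    -- some degree-1 vertex is a source: its unique edge points away from it
    (hsource : ∃ v u : V, G.degree v = 1 ∧ D₀ v u)
    -- some degree-1 vertex is a sink: its unique edge points toward it
    (hsink : ∃ v u : V, G.degree v = 1 ∧ D₀ u v)
    -- every component of `G` minus a cut vertex contains a degree-1 vertex of `G`
    (hcut : ∀ v : V, ¬ (G.induce {u : V | u ≠ v}).Connected →
      ∀ c : (G.induce {u : V | u ≠ v}).ConnectedComponent,
        ∃ u : {u : V // u ∈ {u : V | u ≠ v}},
          (G.induce {u : V | u ≠ v}).connectedComponentMk u = c ∧ G.degree u.1 = 1)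
    -- every component of `G` minus a bridge contains a degree-1 vertex of `G`
    (hbridge : ∀ a b : V, G.IsBridge s(a, b) →
      ∀ c : (G.deleteEdges {s(a, b)}).ConnectedComponent,
        ∃ u : V, (G.deleteEdges {s(a, b)}).connectedComponentMk u = c ∧
          G.degree u = 1) :
    ∃ D : V → V → Prop,
      (∀ a b : V, D a b → G.Adj a b) ∧
      (∀ a b : V, G.Adj a b → (D a b ↔ ¬ D b a)) ∧
      (∀ a b : V, D₀ a b → D a b) ∧
      Irreflexive (Relation.TransGen D) ∧
      (∀ v : V, ((∀ u, ¬ D u v) ∨ (∀ u, ¬ D v u)) → G.degree v = 1) := by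
  have hL : ∀ v a b, G.degree v = 1 → G.Adj v a → G.Adj v b → a = b := by
    intro v a b hv ha hb
    rw [← SimpleGraph.card_neighborFinset_eq_degree] at hv
    exact Finset.card_le_one.mp hv.le a (by simpa using ha) b (by simpa using hb)
  have hnsrc : ∀ v u, G.degree v = 1 → D₀ u v → ¬ ∃ w, D₀ v w := by
    rintro v u hv huv ⟨w, hvw⟩
    have h1 := (hD₀dom _ _ huv).1
    have h2 := (hD₀dom _ _ hvw).1
    have : w = u := hL v w u hv h2 h1.symm
    subst this
    exact (hD₀tot v w h2 (Or.inl hv)).mp hvw huv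
  obtain ⟨f, hf⟩ := LyapOrient.exists_total (G := G) (L := fun v => G.degree v = 1)
    (src := fun v => ∃ u, D₀ v u) hconn hL
    (by obtain ⟨v, u, hv, hu⟩ := hsource; exact ⟨v, hv, u, hu⟩)
    (by obtain ⟨v, u, hv, hu⟩ := hsink; exact ⟨v, hv, hnsrc v u hv hu⟩) hcut
  have hD : ∀ a b, D₀ a b → f a < f b := by
    intro a b hab
    obtain ⟨hadj, hl⟩ := hD₀dom a b hab
    have ha := LyapOrient.good_range hf a (Finset.mem_univ _)
    have hb := LyapOrient.good_range hf b (Finset.mem_univ _)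
    by_cases ha1 : G.degree a = 1
    · have h0 : f a = 0 := hf.leaf_src a ha1 ⟨b, hab⟩
      by_cases hb1 : G.degree b = 1
      · have h1 : f b = 1 := hf.leaf_snk b hb1 (hnsrc b a hb1 hab)
        rw [h0, h1]; norm_num
      · rw [h0]; exact hf.pos b (Finset.mem_univ _) hb1
    · have hb1 : G.degree b = 1 := by tauto
      have h1 : f b = 1 := hf.leaf_snk b hb1 (hnsrc b a hb1 hab)
      rw [h1]; exact hf.lt_one a (Finset.mem_univ _) ha1
  have hne : ∀ a b, G.Adj a b → f a ≠ f b := by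
    intro a b hab he
    by_cases hl : G.degree a = 1 ∨ G.degree b = 1
    · by_cases h1 : D₀ b a
      · exact (hD _ _ h1).ne' he
      · exact (hD _ _ ((hD₀tot a b hab hl).mpr h1)).ne he
    · push Not at hl
      exact hab.ne (hf.inj a (Finset.mem_univ _) b (Finset.mem_univ _) hl.1 he)
  refine ⟨fun a b => G.Adj a b ∧ f a < f b, fun a b h => h.1, ?_, ?_, ?_, ?_⟩
  · intro a b hab
    have := hne a b hab
    constructor
    · rintro ⟨_, h1⟩ ⟨_, h2⟩; exact lt_asymm h1 h2
    · intro h1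
      refine ⟨hab, lt_of_le_of_ne (not_lt.mp fun h2 => h1 ⟨hab.symm, h2⟩) this⟩
  · intro a b hab
    exact ⟨(hD₀dom a b hab).1, hD a b hab⟩
  · have hlt : ∀ a b, Relation.TransGen (fun a b => G.Adj a b ∧ f a < f b) a b → f a < f b := by
      intro a b h
      induction h with
      | single h => exact h.2
      | tail _ h ih => exact ih.trans h.2
    intro a h
    exact lt_irrefl _ (hlt a a h)
  · intro v hv
    by_contra hl
    rcases hv with hv | hv
    · obtain ⟨a, _, h1, h2⟩ := hf.low v (Finset.mem_univ _) hl
      exact hv a ⟨h1.symm, h2⟩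
    · obtain ⟨a, _, h1, h2⟩ := hf.high v (Finset.mem_univ _) hl
      exact hv a ⟨h1, h2⟩
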